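/- For every n ≥ 1 and every m ≥ 0, the number of quasi-Stirling permutations w of size n with des(w) = m+1 equals the number of injective functions f from {1,…,n−1} to {1,…,2n} with exactly m excedances (that is, Q̄_n(t) = t·J_{2n,n+1}(t)). -/

import Mathlib

open Finset
open scoped Classical

/-- Number of descents of a word `w` of length `N` over a linearly ordered
alphabet.  Positions are 0-indexed: a position `i` is a descent if it is the
last position or the letter at `i` is greater than the letter at `i + 1`. -/
noncomputable def desW {α : Type*} [LinearOrder α] {N : ℕ} (w : Fin N → α) : ℕ :=
  (univ.filter fun i : Fin N =>
    (i : ℕ) + 1 = N ∨ ∃ h : (i : ℕ) + 1 < N, w ⟨(i : ℕ) + 1, h⟩ < w i).card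

/-- The set of quasi-Stirling permutations of size `n`, encoded as words
`w : Fin (2 * n) → Fin n` (the letters `1, …, n` are encoded as the elements
of `Fin n`) in which every letter occurs exactly twice and there are no indices
`i < j < l < p` with `w i = w l`, `w j = w p` and `w i ≠ w j`. -/
noncomputable def quasiStirlingSet (n : ℕ) : Finset (Fin (2 * n) → Fin n) :=
  univ.filter fun w =>
    (∀ a : Fin n, (univ.filter fun i => w i = a).card = 2) ∧
    ∀ i j l p : Fin (2 * n), i < j → j < l → l < p →
      w i = w l → w j = w p → w i = w j

/-- Number of excedances of a function `f` from `{1, …, s}` to `{1, …, n}`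
(0-indexed encoding): positions `i` with `f i > i`. -/
noncomputable def excCount {s n : ℕ} (f : Fin s → Fin n) : ℕ :=
  (univ.filter fun i : Fin s => (i : ℕ) < (f i : ℕ)).card

/-! Inserting a new smallest letter into a word of length `N` in all `N + 1` ways, and inserting a
new smallest point into the domain and the codomain `{1, …, N}` of an injection in all `N + 1`
ways, both act on generating polynomials by `f ↦ X (1 - X) f' + (N + 1) X f`.

The two copies of the smallest letter `x` of a quasi-Stirling word enclose a block `B`. The words
`B` and what remains after deleting `x B x` are quasi-Stirling words on complementary sets of
letters, and the descents of `B` are simply added to those of the remaining word with one `x`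
inserted. Hence the exponential generating function `Q = ∑ Q̄_n zⁿ / n!` satisfies
`dQ/dz = Q (L Q + X Q)` with the derivation `L = X (1 - X) d/dX + 2 X z d/dz`. Since `d/dz` and `L`
are both derivations, `(p + 1) d(Qᵖ)/dz = p (L Qᵖ⁺¹ + (p + 1) X Qᵖ⁺¹)`, which expresses the
coefficient of `zˢ⁺¹` in `Qᵖ` through that of `zˢ` in `Qᵖ⁺¹`. This is the recursion of the
excedance polynomials of injections.
-/

section Polynomials

open Polynomial

theorem coeff_sum_X_pow {ι R : Type*} [Semiring R] (s : Finset ι) (d : ι → ℕ) (m : ℕ) :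
    (∑ i ∈ s, (X : R[X]) ^ d i).coeff m = #{i ∈ s | d i = m} := by
  simp [coeff_X_pow, Finset.sum_boole, eq_comm]

/-- The operator `p ↦ X (1 - X) p' + (N + 1) X p`, which describes the effect on descent and
excedance polynomials of inserting a new smallest element in one of `N + 1` places. -/
noncomputable def minInsertion (N : ℕ) : ℚ[X] →ₗ[ℚ] ℚ[X] :=
  LinearMap.mulLeft ℚ (X * (1 - X)) ∘ₗ derivative + LinearMap.mulLeft ℚ (((N : ℚ[X]) + 1) * X)

theorem minInsertion_apply (N : ℕ) (p : ℚ[X]) :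
    minInsertion N p = X * (1 - X) * derivative p + ((N : ℚ[X]) + 1) * X * p :=
  rfl

theorem minInsertion_one (N : ℕ) : minInsertion N 1 = ((N : ℚ[X]) + 1) * X := by
  simp [minInsertion_apply]

theorem minInsertion_X_pow (N d : ℕ) :
    minInsertion N (X ^ d) = (d : ℚ[X]) * X ^ d + ((N : ℚ[X]) + 1 - (d : ℚ[X])) * X ^ (d + 1) := by
  rw [minInsertion_apply, derivative_X_pow]
  rcases d with _ | d
  · simp
  · simp only [Nat.add_sub_cancel, map_natCast]
    push_cast
    ring

theorem minInsertion_natCast_mul (N k : ℕ) (p : ℚ[X]) :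
    minInsertion N (k * p) = k * minInsertion N p := by
  simp only [← nsmul_eq_mul, map_nsmul]

end Polynomials

section Injections

open Polynomial

variable {s M : ℕ}

/-- The injection obtained from `f` by inserting a new smallest point into its domain and its
codomain: the new point is first made a fixed point, then the values `0` and `y` are exchanged. -/
def insertMin (f : Fin s ↪ Fin M) (y : Fin (M + 1)) : Fin (s + 1) ↪ Fin (M + 1) :=
  (Fin.Embedding.cons (f.trans (Fin.succEmb M)) (a := 0) (by simp)).trans
    (Equiv.swap 0 y).toEmbedding

theorem insertMin_zero (f : Fin s ↪ Fin M) (y : Fin (M + 1)) : insertMin f y 0 = y := by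
  simp [insertMin]

theorem insertMin_succ (f : Fin s ↪ Fin M) (y : Fin (M + 1)) (i : Fin s) :
    insertMin f y i.succ = if (f i).succ = y then 0 else (f i).succ := by
  simp [insertMin, Equiv.swap_apply_def]

theorem insertMin_injective :
    Function.Injective fun p : (Fin s ↪ Fin M) × Fin (M + 1) => insertMin p.1 p.2 := by
  rintro ⟨f, y⟩ ⟨f', y'⟩ h
  obtain rfl : y = y' := by simpa [insertMin_zero] using DFunLike.congr_fun h 0
  simp only [Prod.mk.injEq, and_true]
  refine DFunLike.ext _ _ fun i => ?_
  simpa [insertMin] using DFunLike.congr_fun h i.succ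

theorem insertMin_bijective :
    Function.Bijective fun p : (Fin s ↪ Fin M) × Fin (M + 1) => insertMin p.1 p.2 := by
  rw [Fintype.bijective_iff_injective_and_card]
  refine ⟨insertMin_injective, ?_⟩
  simp only [Fintype.card_prod, Fintype.card_embedding_eq, Fintype.card_fin,
    Nat.succ_descFactorial_succ, mul_comm]

/-- The set of values that `f` takes at its excedances. -/
noncomputable def excValues (f : Fin s → Fin M) : Finset (Fin M) :=
  ({i | (i : ℕ) < (f i : ℕ)} : Finset (Fin s)).image f

theorem card_excValues (f : Fin s ↪ Fin M) : #(excValues f) = excCount f :=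
  card_image_of_injective _ f.injective

theorem excCount_insertMin_zero (f : Fin s ↪ Fin M) : excCount (insertMin f 0) = excCount f := by
  simp [excCount, Fin.card_filter_univ_succ, insertMin_zero, insertMin_succ]

theorem excCount_insertMin_succ (f : Fin s ↪ Fin M) (v : Fin M) :
    excCount (insertMin f v.succ) = #((excValues f).erase v) + 1 := by
  have hsucc (i : Fin s) :
      (i.succ : ℕ) < insertMin f v.succ i.succ ↔ (i : ℕ) < f i ∧ f i ≠ v := by
    by_cases h : f i = v <;> simp [insertMin_succ, h]
  have herase : (excValues f).erase v =
      ({i | (i : ℕ) < (f i : ℕ) ∧ f i ≠ v} : Finset (Fin s)).image f := by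
    ext u
    simp only [excValues, mem_erase, mem_image, mem_filter_univ]
    grind
  have hzero : ((0 : Fin (s + 1)) : ℕ) < insertMin f v.succ 0 := by simp [insertMin_zero]
  rw [excCount, Fin.card_filter_univ_succ, herase, card_image_of_injective _ f.injective,
    if_pos hzero]
  simp only [hsucc]

/-- The excedance polynomial `J_{M, M - s}` of the injections from `{1, …, s}` to `{1, …, M}`. -/
noncomputable def excPoly (s M : ℕ) : ℚ[X] :=
  ∑ f : Fin s ↪ Fin M, X ^ excCount f

theorem sum_X_pow_excCount_insertMin (f : Fin s ↪ Fin M) :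
    ∑ y, (X : ℚ[X]) ^ (excCount (insertMin f y) + 1) = minInsertion M (X ^ (excCount f + 1)) := by
  have hv (v : Fin M) : (X : ℚ[X]) ^ (excCount (insertMin f v.succ) + 1) =
      X ^ (excCount f + 2) +
        if v ∈ excValues f then X ^ (excCount f + 1) - X ^ (excCount f + 2) else 0 := by
    rw [excCount_insertMin_succ]
    split_ifs with h
    · rw [card_erase_add_one h, card_excValues, add_sub_cancel]
    · rw [erase_eq_of_notMem h, card_excValues, add_zero]
  rw [Fin.sum_univ_succ, excCount_insertMin_zero, minInsertion_X_pow]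
  simp only [hv, sum_add_distrib, sum_ite_mem, univ_inter, sum_const, card_univ, Fintype.card_fin,
    card_excValues, nsmul_eq_mul]
  push_cast
  ring

theorem X_mul_excPoly_succ_succ (s M : ℕ) :
    X * excPoly (s + 1) (M + 1) = minInsertion M (X * excPoly s M) := by
  simp only [excPoly, mul_sum, map_sum, ← pow_succ', ← sum_X_pow_excCount_insertMin]
  rw [← Fintype.sum_bijective _ insertMin_bijective _ _ fun _ => rfl, Fintype.sum_prod_type]

theorem excPoly_zero (M : ℕ) : excPoly 0 M = 1 := by
  simp [excPoly, excCount]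

theorem coeff_excPoly (s M m : ℕ) :
    (excPoly s M).coeff m =
      #{f : Fin s → Fin M | Function.Injective f ∧ excCount f = m} := by
  rw [excPoly, coeff_sum_X_pow]
  congr 1
  rw [← card_map ⟨_, DFunLike.coe_injective⟩]
  congr 1
  ext f
  simp only [mem_map, mem_filter_univ, Function.Embedding.coeFn_mk]
  constructor
  · rintro ⟨f, hf, rfl⟩
    exact ⟨f.injective, hf⟩
  · rintro ⟨hinj, hf⟩
    exact ⟨⟨f, hinj⟩, hf, rfl⟩

end Injections

section Descents

variable {α : Type*} [LinearOrder α]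

/-- The number of descents of a word given as a list; as in `desW`, the last position of a
nonempty word is a descent. -/
def desList : List α → ℕ
  | [] => 0
  | a :: l => (if ∀ b ∈ l.head?, b < a then 1 else 0) + desList l

theorem desList_cons (a : α) (l : List α) :
    desList (a :: l) = (if ∀ b ∈ l.head?, b < a then 1 else 0) + desList l :=
  rfl

theorem desList_cons_cons (a b : α) (l : List α) :
    desList (a :: b :: l) = (if b < a then 1 else 0) + desList (b :: l) := by
  simp [desList]

theorem desW_succ_succ {N : ℕ} (w : Fin (N + 2) → α) :
    desW w = (if w 1 < w 0 then 1 else 0) + desW fun i : Fin (N + 1) => w i.succ := by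
  have hzero : (((0 : Fin (N + 2)) : ℕ) + 1 = N + 2 ∨
      ∃ h : ((0 : Fin (N + 2)) : ℕ) + 1 < N + 2, w ⟨((0 : Fin (N + 2)) : ℕ) + 1, h⟩ < w 0) ↔
      w 1 < w 0 := by
    simp
  rw [desW, Fin.card_filter_univ_succ, desW]
  simp only [hzero]
  simp only [Fin.val_succ, Nat.add_right_cancel_iff, Nat.add_lt_add_iff_right, Fin.succ_mk]
  split_ifs <;> simp [add_comm]

theorem desList_ofFn : ∀ {N : ℕ} (w : Fin N → α), desList (List.ofFn w) = desW w
  | 0, w => by simp [desList, desW]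
  | 1, w => by
    rw [desW, filter_true_of_mem fun i _ => Or.inl (by omega)]
    simp [desList]
  | N + 2, w => by
    rw [List.ofFn_succ, desW_succ_succ, ← desList_ofFn, List.ofFn_succ, desList_cons_cons]
    rfl

theorem desList_append_cons_of_lt {x : α} {B : List α} (hB : ∀ y ∈ B, x < y) (C : List α) :
    desList (B ++ x :: C) = desList B + desList (x :: C) := by
  induction B with
  | nil => simp [desList]
  | cons b B ih =>
    rw [List.forall_mem_cons] at hB
    rw [List.cons_append, desList_cons, desList_cons, ih hB.2, add_assoc]
    congr 2
    cases B <;> simp [hB.1]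

theorem desList_append_cons_add (A : List α) (x : α) (C D : List α) :
    desList (A ++ x :: C) + desList (x :: D) = desList (A ++ x :: D) + desList (x :: C) := by
  induction A with
  | nil => exact add_comm _ _
  | cons a A ih =>
    have hhead : (A ++ x :: C).head? = (A ++ x :: D).head? := by cases A <;> rfl
    rw [List.cons_append, List.cons_append, desList_cons a, desList_cons a, hhead]
    omega

theorem desList_nest {x : α} {B : List α} (hB : ∀ y ∈ B, x < y) (A C : List α) :
    desList (A ++ x :: (B ++ x :: C)) = desList B + desList (A ++ x :: C) := by
  have hx : desList (x :: (B ++ x :: C)) = desList (B ++ x :: C) := by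
    cases B with
    | nil => simp [desList]
    | cons b B => simp [desList, (hB b (by simp)).le]
  have := desList_append_cons_add A x (B ++ x :: C) C
  rw [hx, desList_append_cons_of_lt hB] at this
  omega

end Descents

section Insertion

open Polynomial

variable {α : Type*} [LinearOrder α] {x : α}

theorem sum_X_pow_desList_cons_insert (v : List α) : ∀ {a : α}, x < a → (∀ y ∈ v, x < y) →
    ∑ p ∈ range (v.length + 1), (X : ℚ[X]) ^ desList (a :: (v.take p ++ x :: v.drop p)) =
      minInsertion (v.length + 1) (X ^ desList (a :: v)) - X ^ desList (a :: v) := by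
  induction v with
  | nil =>
    intro a ha _
    have hax : desList [a, x] = 2 := by simp [desList, ha]
    have hone : desList [a] = 1 := by simp [desList]
    simp only [List.length_nil, zero_add, range_one, sum_singleton, List.take_nil, List.drop_nil,
      List.nil_append, hax, hone, minInsertion_X_pow]
    push_cast
    ring
  | cons b v ih =>
    intro a ha hv
    rw [List.forall_mem_cons] at hv
    have hsucc (p : ℕ) :
        (X : ℚ[X]) ^ desList (a :: ((b :: v).take (p + 1) ++ x :: (b :: v).drop (p + 1))) =
          X ^ (if b < a then 1 else 0) * X ^ desList (b :: (v.take p ++ x :: v.drop p)) := by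
      rw [← pow_add, ← desList_cons_cons]
      rfl
    have hzero :
        desList (a :: ((b :: v).take 0 ++ x :: (b :: v).drop 0)) = 1 + desList (b :: v) := by
      simp [desList_cons_cons, ha, hv.1.le]
    rw [List.length_cons, Finset.sum_range_succ']
    simp only [hsucc, hzero]
    rw [← Finset.mul_sum, ih hv.1 hv.2, desList_cons_cons]
    simp only [minInsertion_X_pow]
    split_ifs <;> push_cast <;> ring

theorem sum_X_pow_desList_insert {v : List α} (hv : ∀ y ∈ v, x < y) :
    ∑ p ∈ range (v.length + 1), (X : ℚ[X]) ^ desList (v.take p ++ x :: v.drop p) =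
      minInsertion v.length (X ^ desList v) := by
  cases v with
  | nil => simp [desList, minInsertion_one]
  | cons a v =>
    rw [List.forall_mem_cons] at hv
    have hzero : desList ((a :: v).take 0 ++ x :: (a :: v).drop 0) = desList (a :: v) := by
      simp [desList_cons_cons, hv.1.le]
    rw [List.length_cons, Finset.sum_range_succ', hzero]
    simp only [List.take_succ_cons, List.drop_succ_cons, List.cons_append]
    rw [sum_X_pow_desList_cons_insert v hv.1 hv.2, sub_add_cancel]

end Insertion

section NonCrossing

variable {α : Type*}

/-- A word is noncrossing if no two distinct letters `a` and `b` occur in it in the pattern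
`a b a b`, not necessarily in adjacent positions. -/
def NonCrossing (l : List α) : Prop :=
  ∀ ⦃a b⦄, [a, b, a, b].Sublist l → a = b

theorem NonCrossing.sublist {l l' : List α} (hl : NonCrossing l) (h : l'.Sublist l) :
    NonCrossing l' :=
  fun _ _ hab => hl (hab.trans h)

theorem nonCrossing_of_length_lt {l : List α} (hl : l.length < 4) : NonCrossing l :=
  fun _ _ hab => absurd hab.length_le (not_le.2 hl)

theorem cons_sublist_of_cons_sublist_append {a : α} {l A D : List α} (ha : a ∉ A)
    (h : (a :: l).Sublist (A ++ D)) : (a :: l).Sublist D := by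
  induction A with
  | nil => exact h
  | cons y A ih =>
    rw [List.mem_cons, not_or] at ha
    exact ih ha.2 (h.of_cons_of_ne ha.1)

theorem mem_of_sublist_append_append {a b : α} {A M C : List α} (hA : a ∉ A) (hC : a ∉ C)
    (h : [a, b, a].Sublist (A ++ (M ++ C))) : b ∈ M := by
  have hMC : [a, b, a].Sublist (M ++ C) := cons_sublist_of_cons_sublist_append hA h
  have hM : [a, b, a].Sublist M.reverse :=
    cons_sublist_of_cons_sublist_append (mt List.mem_reverse.1 hC) (by simpa using hMC.reverse)
  exact List.mem_reverse.1 (hM.subset (by simp))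

theorem nonCrossing_append_append_iff {A M C : List α} (hM : ∀ y ∈ M, y ∉ A ++ C) :
    NonCrossing (A ++ (M ++ C)) ↔ NonCrossing M ∧ NonCrossing (A ++ C) := by
  refine ⟨fun h => ⟨h.sublist ?_, h.sublist ?_⟩, fun ⟨hnM, hnAC⟩ a b hab => ?_⟩
  · exact (List.sublist_append_left M C).trans (List.sublist_append_right A _)
  · exact (List.sublist_append_right M C).append_left A
  have hmem {c d : α} (hc : c ∈ M) (h : [c, d, c].Sublist (A ++ (M ++ C))) : d ∈ M :=
    mem_of_sublist_append_append (fun hA => hM c hc (List.mem_append_left C hA))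
      (fun hC => hM c hc (List.mem_append_right A hC)) h
  have hiff : a ∈ M ↔ b ∈ M :=
    ⟨fun ha => hmem ha (.trans (by simp) hab), fun hb => hmem hb (.trans (by simp) hab)⟩
  by_cases ha : a ∈ M
  · have hfilter : (A ++ (M ++ C)).filter (· ∈ M) = M := by
      rw [List.filter_append, List.filter_append, List.filter_eq_nil_iff.2 (by grind),
        List.filter_eq_self.2 (by grind), List.filter_eq_nil_iff.2 (by grind)]
      simp
    have := hab.filter (· ∈ M)
    rw [hfilter] at this
    exact hnM (by simpa [ha, ← hiff] using this)
  · have hfilter : (A ++ (M ++ C)).filter (· ∉ M) = A ++ C := by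
      rw [List.filter_append, List.filter_append, List.filter_eq_self.2 (by grind),
        List.filter_eq_nil_iff.2 (by grind), List.filter_eq_self.2 (by grind)]
      simp
    have := hab.filter (· ∉ M)
    rw [hfilter] at this
    exact hnAC (by simpa [ha, ← hiff] using this)

theorem nonCrossing_nest_iff {x : α} {A B C : List α} (hA : x ∉ A) (hB : x ∉ B) (hC : x ∉ C)
    (hBAC : ∀ y ∈ B, y ∉ A ++ C) :
    NonCrossing (A ++ x :: (B ++ x :: C)) ↔ NonCrossing B ∧ NonCrossing (A ++ C) := by
  have hblock : NonCrossing ([x] ++ (B ++ [x])) ↔ NonCrossing B := by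
    rw [nonCrossing_append_append_iff (by grind)]
    exact and_iff_left (nonCrossing_of_length_lt (by simp))
  have := nonCrossing_append_append_iff (A := A) (M := [x] ++ (B ++ [x])) (C := C) (by grind)
  rw [← hblock, ← this]
  simp

theorem NonCrossing.disjoint_of_nest {x : α} {A B C : List α} (hB : x ∉ B)
    (h : NonCrossing (A ++ x :: (B ++ x :: C))) : ∀ y ∈ B, y ∉ A ++ C := by
  intro y hyB hyAC
  have hsub : [y].Sublist B := List.singleton_sublist.2 hyB
  have hyx : y = x := by
    rcases List.mem_append.1 hyAC with hyA | hyC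
    · exact h ((List.singleton_sublist.2 hyA).append
        (.cons_cons x (hsub.append (.cons_cons x (List.nil_sublist C)))))
    · exact (h ((List.nil_sublist A).append
        (.cons_cons x (hsub.append (.cons_cons x (List.singleton_sublist.2 hyC)))))).symm
  exact hB (hyx ▸ hyB)

theorem sublist_finRange_iff {N : ℕ} {l : List (Fin N)} :
    l.Sublist (List.finRange N) ↔ l.Pairwise (· < ·) := by
  refine ⟨fun h => List.Pairwise.sublist h (List.pairwise_lt_finRange N), fun h => ?_⟩
  refine List.sublist_of_subperm_of_sortedLE ?_ ?_ (List.sortedLT_finRange N).sortedLE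
  · exact List.subperm_of_subset h.nodup fun i _ => List.mem_finRange i
  · exact (h.imp le_of_lt).sortedLE

theorem nonCrossing_ofFn {N : ℕ} (w : Fin N → α) :
    NonCrossing (List.ofFn w) ↔
      ∀ i j l p : Fin N, i < j → j < l → l < p → w i = w l → w j = w p → w i = w j := by
  rw [List.ofFn_eq_map]
  constructor
  · intro h i j l p hij hjl hlp hil hjp
    have hsub : [i, j, l, p].Sublist (List.finRange N) := by
      rw [sublist_finRange_iff]
      grind
    exact h (by simpa [← hil, ← hjp] using hsub.map w)
  · intro h a b hab
    obtain ⟨l', hl', hmap⟩ := List.sublist_map_iff.1 hab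
    rw [sublist_finRange_iff] at hl'
    obtain ⟨i, _, rfl, rfl, h₁⟩ := List.map_eq_cons_iff.1 hmap.symm
    obtain ⟨j, _, rfl, rfl, h₂⟩ := List.map_eq_cons_iff.1 h₁
    obtain ⟨l, _, rfl, hl, h₃⟩ := List.map_eq_cons_iff.1 h₂
    obtain ⟨p, _, rfl, hp, -⟩ := List.map_eq_cons_iff.1 h₃
    simp only [List.pairwise_cons, List.mem_cons, forall_eq_or_imp] at hl'
    exact h i j l p hl'.1.1 hl'.2.1.1 hl'.2.2.1.1 hl.symm hp.symm

end NonCrossing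

section Words

variable {α : Type*} {x : α}

theorem append_cons_inj_of_notMem_left {A A' D D' : List α} (hA : x ∉ A) (hA' : x ∉ A')
    (h : A ++ x :: D = A' ++ x :: D') : A = A' ∧ D = D' := by
  have hlen : A.length = A'.length := by
    simpa [List.idxOf_append_of_notMem, hA, hA'] using congrArg (List.idxOf x) h
  simpa using List.append_inj h hlen

/-- The word obtained from `v` by inserting the block `x B x` after the first `p` letters. -/
def nest (x : α) (B v : List α) (p : ℕ) : List α :=
  v.take p ++ x :: (B ++ x :: v.drop p)

theorem nest_inj {B B' v v' : List α} {p p' : ℕ} (hB : x ∉ B) (hB' : x ∉ B') (hv : x ∉ v)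
    (hv' : x ∉ v') (hp : p ≤ v.length) (hp' : p' ≤ v'.length)
    (h : nest x B v p = nest x B' v' p') : B = B' ∧ v = v' ∧ p = p' := by
  obtain ⟨htake, hBD⟩ := append_cons_inj_of_notMem_left
    (fun h => hv (List.mem_of_mem_take h)) (fun h => hv' (List.mem_of_mem_take h)) h
  obtain ⟨rfl, hdrop⟩ := append_cons_inj_of_notMem_left hB hB' hBD
  refine ⟨rfl, ?_, ?_⟩
  · rw [← List.take_append_drop p v, htake, hdrop, List.take_append_drop]
  · simpa [hp, hp'] using congrArg List.length htake

variable [DecidableEq α] {S : Finset α}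

theorem exists_eq_nsmul_of_add_eq_nsmul {U V : Multiset α} {k : ℕ} (hUV : Disjoint U V)
    (h : U + V = k • S.val) : ∃ T ⊆ S, U = k • T.val ∧ V = k • (S \ T).val := by
  rw [Multiset.disjoint_left] at hUV
  have hV : ∀ a ∈ V, a ∉ U := fun a hV hU => hUV hU hV
  refine ⟨S.filter (· ∈ U), filter_subset _ S, ?_, ?_⟩
  · rw [filter_val, ← Multiset.filter_nsmul, ← h, Multiset.filter_add,
      Multiset.filter_eq_self.2 fun _ ha => ha, Multiset.filter_eq_nil.2 hV, add_zero]
  · rw [← filter_not, filter_val, ← Multiset.filter_nsmul, ← h, Multiset.filter_add,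
      Multiset.filter_eq_nil.2 fun _ ha => not_not.2 ha, Multiset.filter_eq_self.2 hV, zero_add]

theorem exists_nest_of_count_eq_two {w : List α} (hw : w.count x = 2) :
    ∃ A B C, x ∉ A ∧ x ∉ B ∧ x ∉ C ∧ w = A ++ x :: (B ++ x :: C) := by
  obtain ⟨A, D, rfl, hA⟩ :=
    List.eq_append_cons_of_mem (List.count_pos_iff.1 (by omega : 0 < w.count x))
  rw [List.count_append, List.count_cons_self, List.count_eq_zero_of_not_mem hA] at hw
  obtain ⟨B, C, rfl, hB⟩ :=
    List.eq_append_cons_of_mem (List.count_pos_iff.1 (by omega : 0 < D.count x))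
  rw [List.count_append, List.count_cons_self, List.count_eq_zero_of_not_mem hB] at hw
  exact ⟨A, B, C, hA, hB, List.count_eq_zero.1 (by omega), rfl⟩

/-- The words in which each letter of `S` occurs exactly twice, no other letter occurs, and
no two letters cross. -/
noncomputable def quasiStirlingWords (S : Finset α) : Finset (List α) :=
  {w ∈ (2 • S.val).lists.toFinset | NonCrossing w}

theorem mem_quasiStirlingWords {w : List α} :
    w ∈ quasiStirlingWords S ↔ (w : Multiset α) = 2 • S.val ∧ NonCrossing w := by
  simp [quasiStirlingWords, eq_comm]

theorem length_of_mem_quasiStirlingWords {w : List α} (hw : w ∈ quasiStirlingWords S) :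
    w.length = 2 * #S := by
  simpa using congrArg Multiset.card (mem_quasiStirlingWords.1 hw).1

theorem mem_iff_of_mem_quasiStirlingWords {w : List α} (hw : w ∈ quasiStirlingWords S) {a : α} :
    a ∈ w ↔ a ∈ S := by
  rw [← Multiset.mem_coe, (mem_quasiStirlingWords.1 hw).1, Multiset.mem_nsmul]
  simp

theorem count_eq_two_of_mem_quasiStirlingWords {w : List α} (hw : w ∈ quasiStirlingWords S)
    {a : α} (ha : a ∈ S) : w.count a = 2 := by
  rw [← Multiset.coe_count, (mem_quasiStirlingWords.1 hw).1, Multiset.count_nsmul,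
    Multiset.count_eq_one_of_mem S.nodup ha]

theorem quasiStirlingWords_empty : quasiStirlingWords (∅ : Finset α) = {[]} := by
  ext w
  rw [mem_quasiStirlingWords, mem_singleton]
  constructor
  · simp +contextual
  · rintro rfl
    exact ⟨by simp, nonCrossing_of_length_lt (by simp)⟩

theorem nest_mem_quasiStirlingWords_insert_iff (hx : x ∉ S) {A B C : List α} (hA : x ∉ A)
    (hB : x ∉ B) (hC : x ∉ C) :
    A ++ x :: (B ++ x :: C) ∈ quasiStirlingWords (insert x S) ↔
      ∃ T ⊆ S, B ∈ quasiStirlingWords T ∧ A ++ C ∈ quasiStirlingWords (S \ T) := by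
  have hletters : ((A ++ x :: (B ++ x :: C) : List α) : Multiset α) = 2 • (insert x S).val ↔
      (B : Multiset α) + ((A ++ C : List α) : Multiset α) = 2 • S.val := by
    have hperm : (A ++ x :: (B ++ x :: C)).Perm (x :: x :: (B ++ (A ++ C))) := by
      rw [List.perm_iff_count]
      intro a
      simp only [List.count_append, List.count_cons]
      omega
    rw [Multiset.coe_eq_coe.2 hperm, insert_val_of_notMem hx, two_nsmul, two_nsmul,
      Multiset.cons_add, Multiset.add_cons, ← Multiset.cons_coe, ← Multiset.cons_coe,
      Multiset.cons_inj_right, Multiset.cons_inj_right, Multiset.coe_add]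
  rw [mem_quasiStirlingWords, hletters]
  constructor
  · rintro ⟨hsum, hw⟩
    have hdisj := hw.disjoint_of_nest hB
    obtain ⟨T, hT, hBT, hAC⟩ := exists_eq_nsmul_of_add_eq_nsmul
      (Multiset.disjoint_left.2 fun hyB => hdisj _ hyB) hsum
    have := (nonCrossing_nest_iff hA hB hC hdisj).1 hw
    exact ⟨T, hT, mem_quasiStirlingWords.2 ⟨hBT, this.1⟩, mem_quasiStirlingWords.2 ⟨hAC, this.2⟩⟩
  · rintro ⟨T, hT, hBT, hAC⟩
    have hdisj : ∀ y ∈ B, y ∉ A ++ C := fun y hyB hyAC =>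
      (mem_sdiff.1 ((mem_iff_of_mem_quasiStirlingWords hAC).1 hyAC)).2
        ((mem_iff_of_mem_quasiStirlingWords hBT).1 hyB)
    rw [mem_quasiStirlingWords] at hBT hAC
    refine ⟨?_, (nonCrossing_nest_iff hA hB hC hdisj).2 ⟨hBT.2, hAC.2⟩⟩
    rw [hBT.1, hAC.1, ← nsmul_add, sdiff_val, add_tsub_cancel_of_le (val_le_iff.2 hT)]

theorem sum_quasiStirlingWords_insert {M : Type*} [AddCommMonoid M] (hx : x ∉ S)
    (f : List α → M) :
    ∑ w ∈ quasiStirlingWords (insert x S), f w =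
      ∑ T ∈ S.powerset, ∑ B ∈ quasiStirlingWords T, ∑ v ∈ quasiStirlingWords (S \ T),
        ∑ p ∈ range (v.length + 1), f (nest x B v p) := by
  have hnot {T : Finset α} (hT : T ⊆ S) {u : List α} (hu : u ∈ quasiStirlingWords T) : x ∉ u :=
    fun h => hx (hT ((mem_iff_of_mem_quasiStirlingWords hu).1 h))
  simp only [sum_sigma']
  symm
  refine sum_bij (fun z _ => nest x z.2.1 z.2.2.1 z.2.2.2) ?_ ?_ ?_ fun _ _ => rfl
  · rintro ⟨T, B, v, p⟩ hz
    simp only [mem_sigma, mem_powerset] at hz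
    obtain ⟨hT, hBT, hv, -⟩ := hz
    have hxv := hnot sdiff_subset hv
    refine (nest_mem_quasiStirlingWords_insert_iff hx (fun h => hxv (List.mem_of_mem_take h))
      (hnot hT hBT) (fun h => hxv (List.mem_of_mem_drop h))).2 ⟨T, hT, hBT, ?_⟩
    rwa [List.take_append_drop]
  · rintro ⟨T, B, v, p⟩ hz ⟨T', B', v', p'⟩ hz' h
    simp only [mem_sigma, mem_powerset, mem_range, Nat.lt_succ_iff] at hz hz'
    obtain ⟨hT, hBT, hv, hp⟩ := hz
    obtain ⟨hT', hBT', hv', hp'⟩ := hz'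
    obtain ⟨rfl, rfl, rfl⟩ := nest_inj (hnot hT hBT) (hnot hT' hBT') (hnot sdiff_subset hv)
      (hnot sdiff_subset hv') hp hp' h
    obtain rfl : T = T' := by
      ext a
      rw [← mem_iff_of_mem_quasiStirlingWords hBT, mem_iff_of_mem_quasiStirlingWords hBT']
    rfl
  · intro w hw
    obtain ⟨A, B, C, hA, hB, hC, rfl⟩ := exists_nest_of_count_eq_two
      (count_eq_two_of_mem_quasiStirlingWords hw (mem_insert_self x S))
    obtain ⟨T, hT, hBT, hAC⟩ := (nest_mem_quasiStirlingWords_insert_iff hx hA hB hC).1 hw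
    refine ⟨⟨T, B, A ++ C, A.length⟩, ?_, by simp [nest]⟩
    simp only [mem_sigma, mem_powerset, mem_range]
    exact ⟨hT, hBT, hAC, by simp⟩

end Words

section DescentPolynomials

open Polynomial

variable {α : Type*} [LinearOrder α] {S : Finset α}

/-- The descent polynomial of the quasi-Stirling words with letters in `S`. -/
noncomputable def desPoly (S : Finset α) : ℚ[X] :=
  ∑ w ∈ quasiStirlingWords S, X ^ desList w

theorem desPoly_empty : desPoly (∅ : Finset α) = 1 := by
  simp [desPoly, quasiStirlingWords_empty, desList]

theorem desPoly_insert {x : α} (hx : ∀ y ∈ S, x < y) :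
    desPoly (insert x S) =
      ∑ T ∈ S.powerset, desPoly T * minInsertion (2 * #(S \ T)) (desPoly (S \ T)) := by
  rw [desPoly, sum_quasiStirlingWords_insert fun h => (hx x h).false]
  refine sum_congr rfl fun T hT => ?_
  rw [desPoly, desPoly, sum_mul, map_sum]
  simp only [mul_sum]
  refine sum_congr rfl fun B hB => sum_congr rfl fun v hv => ?_
  have hxB : ∀ y ∈ B, x < y := fun y hy =>
    hx y (mem_powerset.1 hT ((mem_iff_of_mem_quasiStirlingWords hB).1 hy))
  have hxv : ∀ y ∈ v, x < y := fun y hy =>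
    hx y (sdiff_subset ((mem_iff_of_mem_quasiStirlingWords hv).1 hy))
  simp only [nest, desList_nest hxB, pow_add, ← mul_sum]
  rw [sum_X_pow_desList_insert hxv, length_of_mem_quasiStirlingWords hv]

/-- The quasi-Stirling polynomials `Q̄_n`, given by the recursion that results from deleting the
two copies of the smallest letter. -/
noncomputable def quasiStirlingPoly : ℕ → ℚ[X]
  | 0 => 1
  | n + 1 => ∑ i : Fin (n + 1), n.choose i *
      (quasiStirlingPoly i * minInsertion (2 * (n - i)) (quasiStirlingPoly (n - i)))

theorem quasiStirlingPoly_zero : quasiStirlingPoly 0 = 1 := by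
  rw [quasiStirlingPoly]

theorem quasiStirlingPoly_succ (n : ℕ) :
    quasiStirlingPoly (n + 1) = ∑ i ∈ range (n + 1), n.choose i *
      (quasiStirlingPoly i * minInsertion (2 * (n - i)) (quasiStirlingPoly (n - i))) := by
  rw [quasiStirlingPoly, sum_range]

theorem desPoly_eq_quasiStirlingPoly (S : Finset α) : desPoly S = quasiStirlingPoly #S := by
  induction hn : #S using Nat.strong_induction_on generalizing S with
  | _ n ih =>
    rcases S.eq_empty_or_nonempty with rfl | hS
    · rw [← hn, desPoly_empty, card_empty, quasiStirlingPoly_zero]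
    obtain ⟨x, S, hx, rfl⟩ : ∃ x S', (∀ y ∈ S', x < y) ∧ S = insert x S' :=
      ⟨S.min' hS, S.erase (S.min' hS), fun y hy => S.min'_lt_of_mem_erase_min' hS hy,
        (insert_erase (S.min'_mem hS)).symm⟩
    rw [card_insert_of_notMem fun h => (hx x h).false] at hn
    subst hn
    rw [desPoly_insert hx, quasiStirlingPoly_succ]
    simp only [← nsmul_eq_mul]
    rw [← sum_powerset_apply_card fun i =>
      quasiStirlingPoly i * minInsertion (2 * (#S - i)) (quasiStirlingPoly (#S - i))]
    refine sum_congr rfl fun T hT => ?_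
    have hTS := mem_powerset.1 hT
    rw [ih _ (Nat.lt_succ_of_le (card_le_card hTS)) T rfl,
      ih _ (Nat.lt_succ_of_le (card_le_card sdiff_subset)) (S \ T) rfl, card_sdiff_of_subset hTS]

theorem ofFn_mem_quasiStirlingWords_iff {n : ℕ} {w : Fin (2 * n) → Fin n} :
    List.ofFn w ∈ quasiStirlingWords univ ↔ w ∈ quasiStirlingSet n := by
  rw [mem_quasiStirlingWords, quasiStirlingSet, mem_filter_univ, nonCrossing_ofFn]
  refine and_congr_left fun _ => ?_
  have hcount (a : Fin n) : (List.ofFn w).count a = #{i | w i = a} := by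
    rw [← Multiset.coe_count, ← Fin.univ_val_map, Multiset.count_map, card_def, filter_val]
    simp only [eq_comm]
  rw [Multiset.ext]
  simp [hcount]

theorem desPoly_univ_fin (n : ℕ) :
    desPoly (univ : Finset (Fin n)) = ∑ w ∈ quasiStirlingSet n, X ^ desW w := by
  rw [desPoly]
  symm
  refine sum_bij (fun w _ => List.ofFn w) (fun _ => ofFn_mem_quasiStirlingWords_iff.2)
    (fun _ _ _ _ h => List.ofFn_injective h) ?_ fun w _ => by rw [desList_ofFn]
  intro l hl
  obtain ⟨N, w, rfl⟩ := List.exists_iff_exists_tuple.1 ⟨l, rfl⟩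
  obtain rfl : N = 2 * n := by simpa using length_of_mem_quasiStirlingWords hl
  exact ⟨w, ofFn_mem_quasiStirlingWords_iff.1 hl, rfl⟩

end DescentPolynomials

section GeneratingFunctions

open PowerSeries

variable {A : Type*} [CommRing A] [Algebra ℚ A]

/-- The exponential generating function of a sequence in a `ℚ`-algebra. -/
def egf (a : ℕ → A) : A⟦X⟧ :=
  PowerSeries.mk fun n => (n.factorial : ℚ)⁻¹ • a n

theorem coeff_egf (a : ℕ → A) (n : ℕ) : coeff n (egf a) = (n.factorial : ℚ)⁻¹ • a n :=
  coeff_mk _ _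

theorem constantCoeff_egf (a : ℕ → A) : constantCoeff (egf a) = a 0 := by
  simp [egf]

theorem factorial_mul_coeff_egf (a : ℕ → A) (n : ℕ) : n.factorial * coeff n (egf a) = a n := by
  rw [coeff_egf, ← nsmul_eq_mul, ← Nat.cast_smul_eq_nsmul ℚ,
    smul_inv_smul₀ (Nat.cast_ne_zero.2 n.factorial_ne_zero)]

theorem derivative_egf (a : ℕ → A) : derivative A (egf a) = egf fun n => a (n + 1) := by
  ext n
  have hfac : ((n + 1).factorial : ℚ)⁻¹ * (n + 1 : ℕ) = (n.factorial : ℚ)⁻¹ := by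
    rw [Nat.factorial_succ]
    push_cast
    field_simp
  rw [coeff_derivative, coeff_egf, coeff_egf, mul_comm, ← Nat.cast_succ, ← nsmul_eq_mul,
    ← Nat.cast_smul_eq_nsmul ℚ, smul_smul, mul_comm, hfac]

theorem egf_mul_egf (a b : ℕ → A) :
    egf a * egf b = egf fun n => ∑ i ∈ range (n + 1), n.choose i * (a i * b (n - i)) := by
  ext n
  rw [coeff_mul, coeff_egf,
    Finset.Nat.sum_antidiagonal_eq_sum_range_succ fun i j => coeff i (egf a) * coeff j (egf b),
    smul_sum]
  refine sum_congr rfl fun i hi => ?_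
  have hfac :
      (n.factorial : ℚ)⁻¹ * n.choose i = (i.factorial : ℚ)⁻¹ * ((n - i).factorial : ℚ)⁻¹ := by
    rw [Nat.cast_choose ℚ (mem_range_succ_iff.1 hi)]
    field_simp
  rw [coeff_egf, coeff_egf, smul_mul_smul_comm, ← hfac, ← nsmul_eq_mul,
    ← Nat.cast_smul_eq_nsmul ℚ, smul_smul]

end GeneratingFunctions

section DifferentialEquation

open Polynomial
open scoped PowerSeries

theorem succ_mul_derivative_pow {R A : Type*} [CommSemiring R] [CommSemiring A] [Algebra R A⟦X⟧]
    {L : Derivation R A⟦X⟧ A⟦X⟧} {a f : A⟦X⟧} (h : PowerSeries.derivative A f = f * (L f + a * f))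
    (p : ℕ) :
    (p + 1) * PowerSeries.derivative A (f ^ p) =
      p * (L (f ^ (p + 1)) + (p + 1) * a * f ^ (p + 1)) := by
  cases p with
  | zero => simp
  | succ p =>
    simp only [Derivation.leibniz_pow, h, smul_eq_mul, nsmul_eq_mul, Nat.add_sub_cancel]
    push_cast
    ring

/-- The derivation of `ℚ[X]⟦X⟧` that acts on the coefficient of index `s` as
`f ↦ X (1 - X) f' + 2 s X f`. -/
noncomputable def minInsertionDerivation : Derivation ℚ ℚ[X]⟦X⟧ ℚ[X]⟦X⟧ :=
  Derivation.mk'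
    { toFun f := PowerSeries.mk fun s => X * (1 - X) *
        derivative (PowerSeries.coeff s f) +
          2 * (s : ℚ[X]) * X * PowerSeries.coeff s f
      map_add' f g := by
        ext1 s
        simp only [PowerSeries.coeff_mk, map_add]
        ring
      map_smul' c f := by
        ext1 s
        simp [PowerSeries.coeff_mk, smul_add] }
    fun f g => by
      ext1 s
      simp only [LinearMap.coe_mk, AddHom.coe_mk, smul_eq_mul, mul_comm g, map_add,
        PowerSeries.coeff_mul, PowerSeries.coeff_mk, derivative_sum, mul_sum,
        ← sum_add_distrib]
      refine sum_congr rfl fun p hp => ?_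
      rw [← mem_antidiagonal.1 hp, derivative_mul]
      push_cast
      ring

theorem coeff_minInsertionDerivation_add (p : ℕ) (f : ℚ[X]⟦X⟧) (s : ℕ) :
    PowerSeries.coeff s
      (minInsertionDerivation f + ((p : ℚ[X]⟦X⟧) + 1) * PowerSeries.C X * f) =
      minInsertion (2 * s + p) (PowerSeries.coeff s f) := by
  have hC : ((p : ℚ[X]⟦X⟧) + 1) * PowerSeries.C X =
      PowerSeries.C ((p + 1) * X) := by simp
  rw [map_add, hC, PowerSeries.coeff_C_mul, minInsertion_apply]
  simp only [minInsertionDerivation, Derivation.coe_mk', LinearMap.coe_mk, AddHom.coe_mk,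
    PowerSeries.coeff_mk]
  push_cast
  ring

theorem derivative_egf_quasiStirlingPoly :
    PowerSeries.derivative ℚ[X] (egf quasiStirlingPoly) =
      egf quasiStirlingPoly * (minInsertionDerivation (egf quasiStirlingPoly) +
        PowerSeries.C X * egf quasiStirlingPoly) := by
  have hegf : minInsertionDerivation (egf quasiStirlingPoly) +
      PowerSeries.C X * egf quasiStirlingPoly =
        egf fun n => minInsertion (2 * n) (quasiStirlingPoly n) := by
    ext1 s
    have := coeff_minInsertionDerivation_add 0 (egf quasiStirlingPoly) s
    simpa [coeff_egf] using this
  rw [hegf, egf_mul_egf, derivative_egf]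
  simp only [quasiStirlingPoly_succ]

theorem succ_mul_coeff_succ_egf_quasiStirlingPoly_pow (p s : ℕ) :
    ((p : ℚ[X]) + 1) * (((s : ℚ[X]) + 1) * PowerSeries.coeff (s + 1) (egf quasiStirlingPoly ^ p)) =
      (p : ℚ[X]) *
        minInsertion (2 * s + p) (PowerSeries.coeff s (egf quasiStirlingPoly ^ (p + 1))) := by
  have h := congrArg (PowerSeries.coeff s)
    (succ_mul_derivative_pow derivative_egf_quasiStirlingPoly p)
  have hC : (p : ℚ[X]⟦X⟧) = PowerSeries.C (p : ℚ[X]) := by simp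
  have hC' : (p : ℚ[X]⟦X⟧) + 1 = PowerSeries.C ((p : ℚ[X]) + 1) := by simp
  rw [← coeff_minInsertionDerivation_add, ← PowerSeries.coeff_C_mul s, ← hC, ← h, hC',
    PowerSeries.coeff_C_mul, PowerSeries.coeff_derivative, mul_comm ((s : ℚ[X]) + 1)]

theorem factorial_mul_coeff_succ_egf_quasiStirlingPoly_pow (s p : ℕ) :
    ((s + 1).factorial : ℚ[X]) * PowerSeries.coeff (s + 1) (egf quasiStirlingPoly ^ p) =
      (p : ℚ[X]) * (X * excPoly s (2 * s + p + 1)) := by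
  induction s generalizing p with
  | zero =>
    have hrec := succ_mul_coeff_succ_egf_quasiStirlingPoly_pow p 0
    rw [PowerSeries.coeff_zero_eq_constantCoeff_apply, map_pow PowerSeries.constantCoeff,
      constantCoeff_egf, quasiStirlingPoly_zero, one_pow, minInsertion_one] at hrec
    rw [excPoly_zero]
    refine mul_left_cancel₀ (Nat.cast_add_one_ne_zero p) ?_
    push_cast at hrec ⊢
    linear_combination hrec
  | succ s ih =>
    have hrec := succ_mul_coeff_succ_egf_quasiStirlingPoly_pow p (s + 1)
    have hexc := congrArg (minInsertion (2 * (s + 1) + p)) (ih (p + 1))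
    rw [minInsertion_natCast_mul, minInsertion_natCast_mul,
      show 2 * s + (p + 1) + 1 = 2 * (s + 1) + p by ring, ← X_mul_excPoly_succ_succ] at hexc
    refine mul_left_cancel₀ (Nat.cast_add_one_ne_zero p) ?_
    rw [Nat.factorial_succ (s + 1)]
    push_cast at hrec hexc ⊢
    linear_combination ((s + 1).factorial : ℚ[X]) * hrec + (p : ℚ[X]) * hexc

theorem quasiStirlingPoly_succ_eq_X_mul_excPoly (n : ℕ) :
    quasiStirlingPoly (n + 1) = X * excPoly n (2 * (n + 1)) := by
  rw [← factorial_mul_coeff_egf quasiStirlingPoly, ← pow_one (egf quasiStirlingPoly),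
    factorial_mul_coeff_succ_egf_quasiStirlingPoly_pow, Nat.cast_one, one_mul]
  congr 2

theorem sum_X_pow_desW_quasiStirlingSet_succ (n : ℕ) :
    ∑ w ∈ quasiStirlingSet (n + 1), (X : ℚ[X]) ^ desW w = X * excPoly n (2 * (n + 1)) := by
  rw [← desPoly_univ_fin, desPoly_eq_quasiStirlingPoly, card_fin,
    quasiStirlingPoly_succ_eq_X_mul_excPoly]

end DifferentialEquation

/-- The number of quasi-Stirling permutations of size `n` with `m + 1` descents
equals the number of injections from `{1, …, n-1}` to `{1, …, 2n}` with
exactly `m` excedances. -/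
theorem card_des_eq_card_injections (n m : ℕ) (hn : 1 ≤ n) :
    ((quasiStirlingSet n).filter fun w => desW w = m + 1).card
      = (univ.filter fun f : Fin (n - 1) → Fin (2 * n) =>
          Function.Injective f ∧ excCount f = m).card := by
  obtain ⟨n, rfl⟩ := Nat.exists_eq_add_of_le' hn
  have hcoeff := congrArg (Polynomial.coeff · (m + 1)) (sum_X_pow_desW_quasiStirlingSet_succ n)
  simp only [coeff_sum_X_pow, Polynomial.coeff_X_mul, coeff_excPoly] at hcoeff
  exact_mod_cast hcoeff
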